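/- Let A ∈ ℝ^{n×n} be symmetric with eigenvalues λ₁,…,λ_n (counted with multiplicity) ordered so that |λ₁| > |λ₂| ≥ … ≥ |λ_n|, with 0 < |λ₂|, and let v₁ be a unit eigenvector for λ₁ (so span(v₁) is the unique leading eigenspace). Let 0 < ε < 1, let q₀ be a unit vector with (v₁ᵀq₀)² ≥ ε, and let q_j be the power iterates of A started at q₀. Then min{ j ≥ 0 : (v₁ᵀq_j)² > 1 − ε } ≤ 3·log(1/ε)/(2·log(|λ₁|/|λ₂|)) + 1. -/

import Mathlib

open scoped BigOperators
open Matrix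

namespace Stmt8

/-- Euclidean norm of a vector in `ℝⁿ`. -/
noncomputable def enorm {n : ℕ} (v : Fin n → ℝ) : ℝ := Real.sqrt (∑ i, v i ^ 2)

/-- Euclidean inner product of vectors in `ℝⁿ`. -/
def dot {n : ℕ} (v w : Fin n → ℝ) : ℝ := ∑ i, v i * w i

end Stmt8

open Stmt8

/-!
Let `v` be a unit eigenvector of `T` for the dominant eigenvalue `a`, and let `b` bound the norm of
`T` on the invariant subspace `vᗮ`. Applying `T` multiplies the component along `v` by `a` and the
norm of the orthogonal one by at most `b`, so each step multiplies the tangent of the angle to `v`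
by at most `b / ‖a‖`, and normalizing does not change that angle.
As `1 + tan² = 1 / cos²`, the initialization `cos² ≥ ε` gives `tan² ≤ (1 - ε) / ε`, and
the target `cos² > 1 - ε` reads `tan² < ε / (1 - ε)`. It is reached as soon as
`(‖a‖ / b) ^ j > (1 - ε) / ε`.
-/

open scoped InnerProductSpace

section Tangent

variable {𝕜 E : Type*} [RCLike 𝕜] [NormedAddCommGroup E] [InnerProductSpace 𝕜 E] {v w : E}

variable (𝕜) in
/-- The tangent of the angle between the lines spanned by a unit vector `v` and by `w`. It takes the
junk value `0` when `w` is orthogonal to `v`. -/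
noncomputable def tanAngle (v w : E) : ℝ := ‖w - ⟪v, w⟫_𝕜 • v‖ / ‖⟪v, w⟫_𝕜‖

theorem tanAngle_nonneg : 0 ≤ tanAngle 𝕜 v w := by
  unfold tanAngle
  positivity

theorem tanAngle_smul {c : 𝕜} (hc : c ≠ 0) : tanAngle 𝕜 v (c • w) = tanAngle 𝕜 v w := by
  have hres : c • w - ⟪v, c • w⟫_𝕜 • v = c • (w - ⟪v, w⟫_𝕜 • v) := by
    rw [inner_smul_right, mul_smul, smul_sub]
  rw [tanAngle, tanAngle, hres, inner_smul_right, norm_smul, norm_mul,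
    mul_div_mul_left _ _ (norm_ne_zero_iff.mpr hc)]

theorem inner_sub_inner_smul_self (hv : ‖v‖ = 1) (w : E) : ⟪v, w - ⟪v, w⟫_𝕜 • v⟫_𝕜 = 0 := by
  simp [inner_sub_right, inner_smul_right, inner_self_eq_norm_sq_to_K, hv]

theorem norm_sub_inner_smul_sq_add (hv : ‖v‖ = 1) (w : E) :
    ‖w - ⟪v, w⟫_𝕜 • v‖ ^ 2 + ‖⟪v, w⟫_𝕜‖ ^ 2 = ‖w‖ ^ 2 := by
  have horth : ⟪w - ⟪v, w⟫_𝕜 • v, ⟪v, w⟫_𝕜 • v⟫_𝕜 = 0 := by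
    rw [inner_smul_right, inner_eq_zero_symm.mp (inner_sub_inner_smul_self hv w), mul_zero]
  have hpyth := norm_add_sq_eq_norm_sq_add_norm_sq_of_inner_eq_zero _ _ horth
  rw [sub_add_cancel, norm_smul, hv, mul_one] at hpyth
  simpa only [sq] using hpyth.symm

theorem one_add_tanAngle_sq (hv : ‖v‖ = 1) (hw : ‖w‖ = 1) (hvw : ⟪v, w⟫_𝕜 ≠ 0) :
    1 + tanAngle 𝕜 v w ^ 2 = (‖⟪v, w⟫_𝕜‖ ^ 2)⁻¹ := by
  have hne : ‖⟪v, w⟫_𝕜‖ ≠ 0 := norm_ne_zero_iff.mpr hvw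
  have hpyth := norm_sub_inner_smul_sq_add (𝕜 := 𝕜) hv w
  rw [hw] at hpyth
  rw [tanAngle]
  field_simp
  linarith

end Tangent

section PowerIteration

variable {𝕜 E : Type*} [RCLike 𝕜] [NormedAddCommGroup E] [InnerProductSpace 𝕜 E]

/-- `v` is a unit eigenvector of `T` with eigenvalue `a`, and `T` maps the orthogonal complement of
`v` to itself, scaling norms there by at most `b < ‖a‖`. For a symmetric (or normal) operator in
finite dimension with a simple dominant eigenvalue, `b` can be taken to be the second largest
modulus of an eigenvalue. -/
structure IsDominantEigenvector (T : E →ₗ[𝕜] E) (v : E) (a : 𝕜) (b : ℝ) : Prop where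
  norm_eq_one : ‖v‖ = 1
  apply_eq_smul : T v = a • v
  inner_apply_eq_zero : ∀ w, ⟪v, w⟫_𝕜 = 0 → ⟪v, T w⟫_𝕜 = 0
  norm_apply_le : ∀ w, ⟪v, w⟫_𝕜 = 0 → ‖T w‖ ≤ b * ‖w‖
  nonneg : 0 ≤ b
  lt_norm : b < ‖a‖

/-- `q` is a sequence of normalized iterates of `T`. If `T (q j) = 0`, then `0⁻¹ = 0` makes all the
later terms `0`. -/
def IsPowerIteration (T : E →ₗ[𝕜] E) (q : ℕ → E) : Prop :=
  ∀ j, q (j + 1) = (‖T (q j)‖ : 𝕜)⁻¹ • T (q j)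

variable {T : E →ₗ[𝕜] E} {v w : E} {a : 𝕜} {b : ℝ} {q : ℕ → E}

namespace IsDominantEigenvector

theorem eigenvalue_ne_zero (h : IsDominantEigenvector T v a b) : a ≠ 0 :=
  norm_pos_iff.mp (h.nonneg.trans_lt h.lt_norm)

theorem inner_apply (h : IsDominantEigenvector T v a b) (w : E) :
    ⟪v, T w⟫_𝕜 = a * ⟪v, w⟫_𝕜 := by
  have hres := h.inner_apply_eq_zero _ (inner_sub_inner_smul_self h.norm_eq_one w)
  rw [map_sub, map_smul, h.apply_eq_smul, inner_sub_right, inner_smul_right, inner_smul_right,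
    inner_self_eq_norm_sq_to_K, h.norm_eq_one, sub_eq_zero] at hres
  simpa [mul_comm] using hres

theorem apply_ne_zero (h : IsDominantEigenvector T v a b) (hw : ⟪v, w⟫_𝕜 ≠ 0) : T w ≠ 0 := by
  intro hTw
  have hinner := h.inner_apply w
  rw [hTw, inner_zero_right] at hinner
  exact mul_ne_zero h.eigenvalue_ne_zero hw hinner.symm

theorem tanAngle_apply_le (h : IsDominantEigenvector T v a b) (w : E) :
    tanAngle 𝕜 v (T w) ≤ b / ‖a‖ * tanAngle 𝕜 v w := by
  have hres : T w - ⟪v, T w⟫_𝕜 • v = T (w - ⟪v, w⟫_𝕜 • v) := by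
    rw [map_sub, map_smul, h.apply_eq_smul, h.inner_apply, smul_smul, mul_comm]
  have hle := h.norm_apply_le _ (inner_sub_inner_smul_self h.norm_eq_one w)
  calc tanAngle 𝕜 v (T w)
      = ‖T (w - ⟪v, w⟫_𝕜 • v)‖ / (‖a‖ * ‖⟪v, w⟫_𝕜‖) := by
        rw [tanAngle, hres, h.inner_apply, norm_mul]
    _ ≤ b * ‖w - ⟪v, w⟫_𝕜 • v‖ / (‖a‖ * ‖⟪v, w⟫_𝕜‖) := by gcongr
    _ = b / ‖a‖ * tanAngle 𝕜 v w := mul_div_mul_comm _ _ _ _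

end IsDominantEigenvector

namespace IsPowerIteration

theorem inner_ne_zero (hq : IsPowerIteration T q) (h : IsDominantEigenvector T v a b)
    (hq0 : ⟪v, q 0⟫_𝕜 ≠ 0) (j : ℕ) : ⟪v, q j⟫_𝕜 ≠ 0 := by
  induction j with
  | zero => exact hq0
  | succ j ih =>
    have hTq : (‖T (q j)‖ : 𝕜) ≠ 0 := by simpa using h.apply_ne_zero ih
    rw [hq j, inner_smul_right, h.inner_apply]
    exact mul_ne_zero (inv_ne_zero hTq) (mul_ne_zero h.eigenvalue_ne_zero ih)

theorem norm_eq_one (hq : IsPowerIteration T q) (h : IsDominantEigenvector T v a b)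
    (hq0 : ⟪v, q 0⟫_𝕜 ≠ 0) (hq0_norm : ‖q 0‖ = 1) (j : ℕ) : ‖q j‖ = 1 := by
  cases j with
  | zero => exact hq0_norm
  | succ j =>
    rw [hq j]
    exact norm_smul_inv_norm (h.apply_ne_zero (hq.inner_ne_zero h hq0 j))

theorem tanAngle_le (hq : IsPowerIteration T q) (h : IsDominantEigenvector T v a b)
    (hq0 : ⟪v, q 0⟫_𝕜 ≠ 0) (j : ℕ) :
    tanAngle 𝕜 v (q j) ≤ (b / ‖a‖) ^ j * tanAngle 𝕜 v (q 0) := by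
  have hb := h.nonneg
  induction j with
  | zero => simp
  | succ j ih =>
    have hTq : (‖T (q j)‖ : 𝕜) ≠ 0 := by simpa using h.apply_ne_zero (hq.inner_ne_zero h hq0 j)
    calc tanAngle 𝕜 v (q (j + 1)) = tanAngle 𝕜 v (T (q j)) := by
          rw [hq j, tanAngle_smul (inv_ne_zero hTq)]
      _ ≤ b / ‖a‖ * tanAngle 𝕜 v (q j) := h.tanAngle_apply_le _
      _ ≤ b / ‖a‖ * ((b / ‖a‖) ^ j * tanAngle 𝕜 v (q 0)) := by gcongr
      _ = (b / ‖a‖) ^ (j + 1) * tanAngle 𝕜 v (q 0) := by ring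

theorem one_sub_lt_norm_inner_sq_of_lt_pow (hq : IsPowerIteration T q)
    (h : IsDominantEigenvector T v a b) (hb : 0 < b) {ε : ℝ} (hε0 : 0 < ε) (hε1 : ε < 1)
    (hq0_norm : ‖q 0‖ = 1) (hinit : ε ≤ ‖⟪v, q 0⟫_𝕜‖ ^ 2) {j : ℕ}
    (hj : (1 - ε) / ε < (‖a‖ / b) ^ j) : 1 - ε < ‖⟪v, q j⟫_𝕜‖ ^ 2 := by
  have hε : 0 < 1 - ε := sub_pos.mpr hε1
  have hq0 : ⟪v, q 0⟫_𝕜 ≠ 0 :=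
    norm_ne_zero_iff.mp (ne_zero_pow two_ne_zero (hε0.trans_le hinit).ne')
  have hqj := hq.inner_ne_zero h hq0 j
  have hqj_norm := hq.norm_eq_one h hq0 hq0_norm j
  have hstart : tanAngle 𝕜 v (q 0) ^ 2 ≤ (1 - ε) / ε := by
    have hinv := inv_anti₀ hε0 hinit
    rw [← one_add_tanAngle_sq h.norm_eq_one hq0_norm hq0] at hinv
    rw [sub_div, div_self hε0.ne', one_div]
    linarith
  have hrate : (b / ‖a‖) ^ j < ε / (1 - ε) := by
    rw [← inv_div ‖a‖ b, inv_pow, ← inv_div (1 - ε) ε]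
    exact inv_strictAnti₀ (by positivity) hj
  have htan : 1 + tanAngle 𝕜 v (q j) ^ 2 < (1 - ε)⁻¹ :=
    calc 1 + tanAngle 𝕜 v (q j) ^ 2
        ≤ 1 + ((b / ‖a‖) ^ j * tanAngle 𝕜 v (q 0)) ^ 2 := by
          gcongr
          · exact tanAngle_nonneg
          · exact hq.tanAngle_le h hq0 j
      _ ≤ 1 + ((b / ‖a‖) ^ j) ^ 2 * ((1 - ε) / ε) := by rw [mul_pow]; gcongr
      _ < 1 + (ε / (1 - ε)) ^ 2 * ((1 - ε) / ε) := by gcongr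
      _ = (1 - ε)⁻¹ := by field_simp; ring
  rw [one_add_tanAngle_sq h.norm_eq_one hqj_norm hqj] at htan
  exact (inv_lt_inv₀ (by positivity) hε).mp htan

end IsPowerIteration

theorem power_iteration_convergence_time_general (hq : IsPowerIteration T q)
    (h : IsDominantEigenvector T v a b) (hb : 0 < b) {ε : ℝ} (hε0 : 0 < ε) (hε1 : ε < 1)
    (hq0_norm : ‖q 0‖ = 1) (hinit : ε ≤ ‖⟪v, q 0⟫_𝕜‖ ^ 2) :
    ∃ j : ℕ, (j : ℝ) ≤ Real.log (1 / ε) / Real.log (‖a‖ / b) + 1 ∧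
      1 - ε < ‖⟪v, q j⟫_𝕜‖ ^ 2 := by
  have hlog : 0 < Real.log (‖a‖ / b) := Real.log_pos ((one_lt_div hb).mpr h.lt_norm)
  have hlogε : 0 ≤ Real.log (1 / ε) := Real.log_nonneg ((one_le_div hε0).mpr hε1.le)
  refine ⟨⌊Real.log (1 / ε) / Real.log (‖a‖ / b)⌋₊ + 1, ?_, ?_⟩
  · push_cast
    gcongr
    exact Nat.floor_le (by positivity)
  · refine hq.one_sub_lt_norm_inner_sq_of_lt_pow h hb hε0 hε1 hq0_norm hinit ?_
    calc (1 - ε) / ε < 1 / ε := by gcongr; linarith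
      _ < (‖a‖ / b) ^ (⌊Real.log (1 / ε) / Real.log (‖a‖ / b)⌋₊ + 1) := by
        rw [Real.lt_pow_iff_log_lt (by positivity) (div_pos (hb.trans h.lt_norm) hb),
          ← div_lt_iff₀ hlog]
        exact_mod_cast Nat.lt_floor_add_one _

end PowerIteration

section Diagonalizable

variable {𝕜 E ι : Type*} [RCLike 𝕜] [NormedAddCommGroup E] [InnerProductSpace 𝕜 E] [Fintype ι]
  {T : E →ₗ[𝕜] E} {e : OrthonormalBasis ι 𝕜 E} {μ : ι → 𝕜}

theorem inner_eigenbasis_apply (he : ∀ i, T (e i) = μ i • e i) (i : ι) (w : E) :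
    ⟪e i, T w⟫_𝕜 = μ i * ⟪e i, w⟫_𝕜 := by
  classical
  conv_lhs => rw [← e.sum_repr' w]
  simp [he, inner_sum, inner_smul_right, e.inner_eq_ite, mul_comm]

theorem norm_apply_le_of_eigenbasis (he : ∀ i, T (e i) = μ i • e i) {b : ℝ} (hb : 0 ≤ b) {w : E}
    (hμ : ∀ i, ⟪e i, w⟫_𝕜 ≠ 0 → ‖μ i‖ ≤ b) : ‖T w‖ ≤ b * ‖w‖ := by
  refine le_of_sq_le_sq ?_ (by positivity)
  rw [mul_pow, ← e.sum_sq_norm_inner_right, ← e.sum_sq_norm_inner_right w, Finset.mul_sum]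
  refine Finset.sum_le_sum fun i _ => ?_
  rw [inner_eigenbasis_apply he, norm_mul, mul_pow]
  rcases eq_or_ne ⟪e i, w⟫_𝕜 0 with hzero | hne
  · simp [hzero]
  · gcongr
    exact hμ i hne

theorem isDominantEigenvector_of_eigenbasis (he : ∀ i, T (e i) = μ i • e i) {v : E} {a : 𝕜} {b : ℝ}
    {k : ι} (hμ : ∀ i ≠ k, ‖μ i‖ ≤ b) (hv : ‖v‖ = 1) (hTv : T v = a • v) (hb : 0 ≤ b)
    (hab : b < ‖a‖) : IsDominantEigenvector T v a b := by
  have hvi : ∀ i ≠ k, ⟪e i, v⟫_𝕜 = 0 := by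
    intro i hi
    have hμv := inner_eigenbasis_apply he i v
    rw [hTv, inner_smul_right] at hμv
    by_contra hne
    rw [mul_right_cancel₀ hne hμv] at hab
    exact (hμ i hi).not_gt hab
  have hvk : v = ⟪e k, v⟫_𝕜 • e k := by
    conv_lhs => rw [← e.sum_repr' v]
    exact Finset.sum_eq_single k (fun i _ hi => by rw [hvi i hi, zero_smul]) (by simp)
  have hc : ⟪e k, v⟫_𝕜 ≠ 0 := by
    intro hzero
    rw [hzero, zero_smul] at hvk
    simp [hvk] at hv
  have horth : ∀ w, ⟪v, w⟫_𝕜 = 0 ↔ ⟪e k, w⟫_𝕜 = 0 := by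
    intro w
    rw [hvk, inner_smul_left, mul_eq_zero, or_iff_right ((map_ne_zero _).mpr hc)]
  refine ⟨hv, hTv, fun w hw => ?_, fun w hw => ?_, hb, hab⟩
  · rw [horth, inner_eigenbasis_apply he, (horth w).mp hw, mul_zero]
  · refine norm_apply_le_of_eigenbasis he hb fun i hi => hμ i ?_
    rintro rfl
    exact hi ((horth w).mp hw)

end Diagonalizable

section Matrix

variable {𝕜 ι : Type*} [RCLike 𝕜] [Fintype ι] [DecidableEq ι] {A : Matrix ι ι 𝕜}

theorem toEuclideanLin_reindex_eigenvectorBasis (hA : A.IsHermitian) (σ : Equiv.Perm ι) (i : ι) :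
    A.toEuclideanLin (hA.eigenvectorBasis.reindex σ.symm i) =
      (hA.eigenvalues (σ i) : 𝕜) • hA.eigenvectorBasis.reindex σ.symm i :=
  WithLp.ofLp_injective 2 <| by
    simpa [← RCLike.real_smul_eq_coe_smul] using hA.mulVec_eigenvectorBasis (σ i)

theorem isDominantEigenvector_toEuclideanLin (hA : A.IsHermitian) {lam : ι → ℝ}
    (hperm : ∃ σ : Equiv.Perm ι, ∀ i, lam i = hA.eigenvalues (σ i)) {b : ℝ} {k : ι}
    (hlam : ∀ i ≠ k, |lam i| ≤ b) {v : ι → 𝕜} (hv : ‖WithLp.toLp 2 v‖ = 1) {a : 𝕜}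
    (hAv : A *ᵥ v = a • v) (hb : 0 ≤ b) (hab : b < ‖a‖) :
    IsDominantEigenvector A.toEuclideanLin (WithLp.toLp 2 v) a b := by
  obtain ⟨σ, hσ⟩ := hperm
  have hTv : A.toEuclideanLin (WithLp.toLp 2 v) = a • WithLp.toLp 2 v := by
    rw [toLpLin_toLp, toLin'_apply, hAv, WithLp.toLp_smul]
  refine isDominantEigenvector_of_eigenbasis (k := k)
    (toEuclideanLin_reindex_eigenvectorBasis hA σ) (fun i hi => ?_) hv hTv hb hab
  rw [RCLike.norm_ofReal, ← hσ]
  exact hlam i hi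

end Matrix

namespace Stmt8

variable {n : ℕ}

theorem enorm_eq_norm_toLp (v : Fin n → ℝ) : Stmt8.enorm v = ‖WithLp.toLp 2 v‖ := by
  simp [Stmt8.enorm, EuclideanSpace.norm_eq]

theorem dot_sq_eq_norm_inner_toLp_sq (v w : Fin n → ℝ) :
    dot v w ^ 2 = ‖⟪WithLp.toLp 2 v, WithLp.toLp 2 w⟫_ℝ‖ ^ 2 := by
  simp [dot, PiLp.inner_apply, mul_comm]

theorem isPowerIteration_toEuclideanLin {A : Matrix (Fin n) (Fin n) ℝ} {q : ℕ → Fin n → ℝ}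
    (hrec : ∀ i, q (i + 1) = (Stmt8.enorm (A *ᵥ q i))⁻¹ • (A *ᵥ q i)) :
    IsPowerIteration A.toEuclideanLin (fun j => WithLp.toLp 2 (q j)) := by
  intro j
  simp [hrec j, enorm_eq_norm_toLp, toLpLin_toLp]

end Stmt8

theorem log_div_log_le_three_mul_log_div_two_mul_log {x y : ℝ} (hx : 1 ≤ x) (hy : 1 ≤ y) :
    Real.log x / Real.log y ≤ 3 * Real.log x / (2 * Real.log y) := by
  rw [mul_div_mul_comm]
  exact le_mul_of_one_le_left (div_nonneg (Real.log_nonneg hx) (Real.log_nonneg hy)) (by norm_num)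

/-- Convergence time of the power iteration: if the eigenvalues of the
symmetric matrix `A` (listed with multiplicity as `lam`, nonincreasing in magnitude)
satisfy `|λ₁| > |λ₂| > 0`, `v₁` is a unit eigenvector for `λ₁`, and the initialization
satisfies `(v₁ᵀq₀)² ≥ ε`, then `(v₁ᵀq_j)² > 1 − ε` for some
`j ≤ 3·log(1/ε)/(2·log(|λ₁|/|λ₂|)) + 1`. -/
theorem power_iteration_convergence_time
    (n : ℕ) (hn : 1 < n)
    (A : Matrix (Fin n) (Fin n) ℝ) (hA : A.IsHermitian)
    (lam : Fin n → ℝ)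
    (hperm : ∃ σ : Equiv.Perm (Fin n), ∀ i, lam i = hA.eigenvalues (σ i))
    (hord : ∀ i j : Fin n, i ≤ j → |lam j| ≤ |lam i|)
    (hgap : |lam ⟨1, hn⟩| < |lam ⟨0, by omega⟩|)
    (hpos : 0 < |lam ⟨1, hn⟩|)
    (v1 : Fin n → ℝ) (hv1unit : Stmt8.enorm v1 = 1)
    (hv1eig : A *ᵥ v1 = lam ⟨0, by omega⟩ • v1)
    (ε : ℝ) (hε0 : 0 < ε) (hε1 : ε < 1)
    (q : ℕ → Fin n → ℝ) (hq0unit : Stmt8.enorm (q 0) = 1)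
    (hinit : ε ≤ dot v1 (q 0) ^ 2)
    (hrec : ∀ i : ℕ, q (i + 1) = (Stmt8.enorm (A *ᵥ q i))⁻¹ • (A *ᵥ q i)) :
    ∃ j : ℕ, (j : ℝ) ≤ 3 * Real.log (1 / ε) / (2 * Real.log (|lam ⟨0, by omega⟩| / |lam ⟨1, hn⟩|)) + 1
      ∧ 1 - ε < dot v1 (q j) ^ 2 := by
  rw [enorm_eq_norm_toLp] at hv1unit hq0unit
  simp only [dot_sq_eq_norm_inner_toLp_sq] at hinit ⊢
  have hsecond : ∀ i ≠ (⟨0, by omega⟩ : Fin n), |lam i| ≤ |lam ⟨1, hn⟩| := fun i hi =>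
    hord _ _ (Fin.mk_le_of_le_val (Nat.one_le_iff_ne_zero.mpr (Fin.val_ne_of_ne hi)))
  have hdom := isDominantEigenvector_toEuclideanLin hA hperm hsecond hv1unit hv1eig hpos.le hgap
  obtain ⟨j, hj, hcos⟩ := power_iteration_convergence_time_general
    (isPowerIteration_toEuclideanLin hrec) hdom hpos hε0 hε1 hq0unit hinit
  have hfactor := log_div_log_le_three_mul_log_div_two_mul_log ((one_le_div hε0).mpr hε1.le)
    ((one_le_div hpos).mpr hgap.le)
  exact ⟨j, hj.trans (add_le_add_left hfactor 1), hcos⟩
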